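/- Let (R,B) be an EIC problem with problem graph G such that every requested block is held by some node (for every (u,a) ∈ P there exists w ∈ [n] with B_{wa}=1). If A ∈ F_2^{V×m} is a matrix such that φ_{(R,B)}(A) fits G, then there exists a decentralized linear broadcast solution to (R,B) of length at most 2·rank_2(A). -/

import Mathlib

open Matrix BigOperators

namespace EIC

variable {n m : ℕ}

/-- The vertex set of the problem graph of the EIC problem `(R, B)`:
one vertex for each requirement pair `(u, a)` with `R u a = 1`. -/
abbrev Vtx (R : Matrix (Fin n) (Fin m) (ZMod 2)) : Type :=
  {p : Fin n × Fin m // R p.1 p.2 = 1}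

/-- `(R, B)` have disjoint supports: no position has both `B = 1` and `R = 1`. -/
def DisjointSupports (R B : Matrix (Fin n) (Fin m) (ZMod 2)) : Prop :=
  ∀ u a, ¬(B u a = 1 ∧ R u a = 1)

/-- The standard basis vector `e_a ∈ F_2^m`. -/
def e (m : ℕ) (a : Fin m) : Fin m → ZMod 2 := Pi.single a 1

/-- `β` (with rows indexed by `ι`) is a centralized linear broadcast solution to `(R, B)`:
for every requirement pair `(u, a)` there is `α` with `e_a = α · [β ; diag(B_u)]`. -/
def IsCentralizedSolution (R B : Matrix (Fin n) (Fin m) (ZMod 2))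
    {ι : Type} [Fintype ι] (β : Matrix ι (Fin m) (ZMod 2)) : Prop :=
  ∀ u a, R u a = 1 →
    ∃ α : ι ⊕ Fin m → ZMod 2,
      e m a = α ᵥ* Matrix.fromRows β (Matrix.diagonal (B u))

/-- `(C)_{(R,B)}`: the minimum length of a centralized linear broadcast solution. -/
noncomputable def Copt (R B : Matrix (Fin n) (Fin m) (ZMod 2)) : ℕ :=
  sInf {h | ∃ β : Matrix (Fin h) (Fin m) (ZMod 2), IsCentralizedSolution R B β}

/-- The vertical concatenation of the matrices `β u`, `u ∈ [n]`. -/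
def vconcat {h : Fin n → ℕ} (β : ∀ u : Fin n, Matrix (Fin (h u)) (Fin m) (ZMod 2)) :
    Matrix ((ℓ : Fin n) × Fin (h ℓ)) (Fin m) (ZMod 2) :=
  Matrix.of fun p => β p.1 p.2

/-- `β⁽¹⁾, …, β⁽ⁿ⁾` is a (decentralized) linear broadcast solution to `(R, B)`. -/
def IsBroadcastSolution (R B : Matrix (Fin n) (Fin m) (ZMod 2))
    {h : Fin n → ℕ} (β : ∀ u : Fin n, Matrix (Fin (h u)) (Fin m) (ZMod 2)) : Prop :=
  (∀ u a, B u a = 0 → ∀ i, β u i a = 0) ∧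
  ∀ u a, R u a = 1 →
    ∃ α : ((ℓ : Fin n) × Fin (h ℓ)) ⊕ Fin m → ZMod 2,
      e m a = α ᵥ* Matrix.fromRows (vconcat β) (Matrix.diagonal (B u))

/-- `(D)_{(R,B)}`: the minimum length of a decentralized linear broadcast solution. -/
noncomputable def Dopt (R B : Matrix (Fin n) (Fin m) (ZMod 2)) : ℕ :=
  sInf {s | ∃ (h : Fin n → ℕ) (β : ∀ u : Fin n, Matrix (Fin (h u)) (Fin m) (ZMod 2)),
    IsBroadcastSolution R B β ∧ ∑ u, h u = s}

/-- A task-based solution: a linear broadcast solution where every requirement pair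
`(u, a)` can be decoded from the broadcast of a single responsible sender `ℓ`. -/
def IsTaskBased (R B : Matrix (Fin n) (Fin m) (ZMod 2))
    {h : Fin n → ℕ} (β : ∀ u : Fin n, Matrix (Fin (h u)) (Fin m) (ZMod 2)) : Prop :=
  IsBroadcastSolution R B β ∧
  ∀ u a, R u a = 1 → ∃ ℓ : Fin n, ∃ α : Fin (h ℓ) ⊕ Fin m → ZMod 2,
    e m a = α ᵥ* Matrix.fromRows (β ℓ) (Matrix.diagonal (B u))

/-- `(T)_{(R,B)}`: the minimum length of a task-based solution. -/
noncomputable def Topt (R B : Matrix (Fin n) (Fin m) (ZMod 2)) : ℕ :=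
  sInf {s | ∃ (h : Fin n → ℕ) (β : ∀ u : Fin n, Matrix (Fin (h u)) (Fin m) (ZMod 2)),
    IsTaskBased R B β ∧ ∑ u, h u = s}

/-- The edge relation of the problem graph: for distinct requirement pairs `(u,a)`, `(w,b)`,
there is an edge from `v_{(u,a)}` to `v_{(w,b)}` iff `B u b = 1` or `a = b`. -/
def probEdge (R B : Matrix (Fin n) (Fin m) (ZMod 2)) (v w : Vtx R) : Prop :=
  v ≠ w ∧ (B v.1.1 w.1.2 = 1 ∨ v.1.2 = w.1.2)

/-- A matrix `A` fits a directed graph with edge relation `E`. -/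
def Fits {V : Type} (E : V → V → Prop) (A : Matrix V V (ZMod 2)) : Prop :=
  (∀ k, A k k = 1) ∧ ∀ k l, k ≠ l → ¬ E k l → A k l = 0

/-- `minrk₂`: the minimum `F₂`-rank of a matrix fitting the graph. -/
noncomputable def minrk {V : Type} [Fintype V] (E : V → V → Prop) : ℕ :=
  sInf {r | ∃ A : Matrix V V (ZMod 2), Fits E A ∧ A.rank = r}

/-- `rminrk₂`: the minimum `F₂`-rank of a matrix in `𝒜` fitting the graph. -/
noncomputable def rminrk {V : Type} [Fintype V] (E : V → V → Prop)
    (𝒜 : Set (Matrix V V (ZMod 2))) : ℕ :=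
  sInf {r | ∃ A ∈ 𝒜, Fits E A ∧ A.rank = r}

/-- The column repetition function `φ_{(R,B)}`: the column of `φ(A)` indexed by
`v_{(u,a)}` is the `a`-th column of `A`. -/
def phi (R : Matrix (Fin n) (Fin m) (ZMod 2))
    (A : Matrix (Vtx R) (Fin m) (ZMod 2)) : Matrix (Vtx R) (Vtx R) (ZMod 2) :=
  Matrix.of fun k v => A k v.1.2

/-- The sender neighborhood `N_u = {v_{(w,b)} ∈ V : B u b = 1}`. -/
def senderNbhd (R B : Matrix (Fin n) (Fin m) (ZMod 2)) (u : Fin n) : Set (Vtx R) :=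
  {v | B u v.1.2 = 1}

/-- A neighborhood partition `{Ñ_1, …, Ñ_n}`. -/
def IsNbhdPartition (R B : Matrix (Fin n) (Fin m) (ZMod 2))
    (N : Fin n → Set (Vtx R)) : Prop :=
  (∀ i, N i ⊆ senderNbhd R B i) ∧
  (∀ i j, i ≠ j → Disjoint (N i) (N j)) ∧
  (⋃ i, N i) = Set.univ

open Classical in
/-- `R^(i)`: the request matrix of the EIC subproblem induced by `Ñ_i`; it has ones
exactly at the requirement pairs whose vertex lies in `Ñ_i`. -/
noncomputable def Rsub (R : Matrix (Fin n) (Fin m) (ZMod 2))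
    (N : Fin n → Set (Vtx R)) (i : Fin n) : Matrix (Fin n) (Fin m) (ZMod 2) :=
  Matrix.of fun u a =>
    if hr : R u a = 1 then (if (⟨(u, a), hr⟩ : Vtx R) ∈ N i then 1 else 0) else 0

open Classical in
/-- `B^(i)`: the has-matrix of the EIC subproblem induced by `Ñ_i`; it agrees with `B`
on the columns of blocks requested in `Ñ_i` and is zero elsewhere. -/
noncomputable def Bsub (R B : Matrix (Fin n) (Fin m) (ZMod 2))
    (N : Fin n → Set (Vtx R)) (i : Fin n) : Matrix (Fin n) (Fin m) (ZMod 2) :=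
  Matrix.of fun u a => if ∃ v ∈ N i, v.1.2 = a then B u a else 0

/-- `Cl` is a clique for the edge relation `E`. -/
def IsClique {V : Type} (E : V → V → Prop) (Cl : Set V) : Prop :=
  ∀ k ∈ Cl, ∀ l ∈ Cl, k ≠ l → E k l

/-- `I` is an independent set for the edge relation `E` (no edge in either direction). -/
def IsIndep {V : Type} (E : V → V → Prop) (I : Set V) : Prop :=
  ∀ k ∈ I, ∀ l ∈ I, k ≠ l → ¬ E k l ∧ ¬ E l k

/-- `χ(Ḡ|_S)`: the minimum number of cliques of the induced subgraph `G|_S`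
needed to partition `S`. -/
noncomputable def cliqueCoverNum {V : Type} (E : V → V → Prop) (S : Set V) : ℕ :=
  sInf {t | ∃ Cl : Fin t → Set V, (∀ i, Cl i ⊆ S) ∧ (∀ i, IsClique E (Cl i)) ∧
    (∀ i j, i ≠ j → Disjoint (Cl i) (Cl j)) ∧ (⋃ i, Cl i) = S}

/-- `χ(G)`: the minimum number of independent sets of `G` needed to partition
its vertex set. -/
noncomputable def chromNum {V : Type} [Fintype V] (E : V → V → Prop) : ℕ :=
  sInf {t | ∃ I : Fin t → Set V, (∀ i, IsIndep E (I i)) ∧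
    (∀ i j, i ≠ j → Disjoint (I i) (I j)) ∧ (⋃ i, I i) = Set.univ}

/-- `ω(Ḡ|_S)`: the maximum size of an independent set of the induced subgraph `G|_S`. -/
noncomputable def indepNum {V : Type} (E : V → V → Prop) (S : Set V) : ℕ :=
  sSup {t | ∃ I ⊆ S, IsIndep E I ∧ I.ncard = t}

/-- The set of neighborhood-cliques: vertex sets of maximal cliques of the induced
subgraphs `G|_{N_i}`, over all senders `i`. -/
def nbhdCliques (R B : Matrix (Fin n) (Fin m) (ZMod 2)) : Set (Set (Vtx R)) :=
  {Cl | ∃ i : Fin n, Cl ⊆ senderNbhd R B i ∧ IsClique (probEdge R B) Cl ∧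
    ∀ Cl', Cl ⊆ Cl' → Cl' ⊆ senderNbhd R B i → IsClique (probEdge R B) Cl' → Cl' = Cl}

/-!
Zeroing the columns of blocks that nobody requests does not increase `r = rank A`, and afterwards
the row of a request `(u, a)` is `e_a` plus a combination of blocks held by `u`, so `u` can decode
`a` from it. Choose `r` rows spanning the row space. Each of them is the sum of two messages that
some node can send: `e_a` by a holder of `a`, and the difference by `u` itself. These `2r`
broadcasts span every row.
-/

lemma rank_of_indicator_row_le {V M R : Type*} [Fintype M] [CommSemiring R]
    [StrongRankCondition R] (A : Matrix V M R) (S : Set M) :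
    (Matrix.of fun v => S.indicator (A.row v)).rank ≤ A.rank := by
  classical
  let D : Matrix M M R := diagonal (S.indicator 1)
  have hmul : Matrix.of (fun v => S.indicator (A.row v)) = A * D := by
    ext v b
    by_cases hb : b ∈ S <;> simp [D, hb]
  exact hmul ▸ rank_mul_le_left A _

section Matrix

variable {V ι M K : Type*} [Field K] [Fintype M]

lemma exists_eq_mul_submatrix_rank [Finite V] (A : Matrix V M K) :
    ∃ (f : Fin A.rank → V) (C : Matrix V (Fin A.rank) K), A = C * A.submatrix f id := by
  have hrows := Submodule.exists_fun_fin_finrank_span_eq K (Set.range A.row)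
  rw [← rank_eq_finrank_span_row] at hrows
  obtain ⟨g, hg, hspan, -⟩ := hrows
  choose f hf using hg
  have hcoeff : ∀ v, ∃ c : Fin A.rank → K, c ᵥ* A.submatrix f id = A v := by
    intro v
    have hv : A.row v ∈ Submodule.span K (Set.range g) :=
      hspan ▸ Submodule.subset_span ⟨v, rfl⟩
    have hg : g = (A.submatrix f id).row := funext fun i => (hf i).symm
    rwa [hg, ← range_vecMulLinear] at hv
  choose C hC using hcoeff
  exact ⟨f, Matrix.of C, funext fun v => (hC v).symm⟩

lemma exists_eq_vecMul_fromRows_diagonal_iff [Fintype ι] [DecidableEq M]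
    (β : Matrix ι M K) (d y : M → K) :
    (∃ α, y = α ᵥ* fromRows β (diagonal d)) ↔
      ∃ x : ι → K, ∀ b, d b = 0 → (x ᵥ* β) b = y b := by
  constructor
  · rintro ⟨α, rfl⟩
    exact ⟨α ∘ Sum.inl, fun b hb => by simp [vecMul_fromRows, vecMul_diagonal, hb]⟩
  · rintro ⟨x, hx⟩
    refine ⟨Sum.elim x fun b => (y b - (x ᵥ* β) b) / d b, funext fun b => ?_⟩
    by_cases hb : d b = 0
    · simp [vecMul_diagonal, hb, hx b hb]
    · simp [vecMul_diagonal, hb]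

end Matrix

lemma exists_sigma_fin_equiv {N T : Type*} [Finite T] (s : T → N) :
    ∃ (h : N → ℕ) (φ : (Σ u, Fin (h u)) ≃ T), ∀ p, s (φ p) = p.1 := by
  classical
  have := Fintype.ofFinite T
  let φ := (Equiv.sigmaCongrRight fun u => (Fintype.equivFin {i // s i = u}).symm).trans
    (Equiv.sigmaFiberEquiv s)
  exact ⟨_, φ, fun p => ((Fintype.equivFin {i // s i = p.1}).symm p.2).2⟩

section Broadcast

variable {V M N K : Type*} [Field K] [Fintype M] [DecidableEq M] [Fintype N]
  {B : Matrix N M K} {node : V → N} {block : V → M}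

/-- Decentralized linear broadcast solutions over a field `K`, for a family of requests `v : V` in
which the node `node v` asks for the block `block v`. Node `u` has block `b` when `B u b ≠ 0`. -/
def IsLinearBroadcast (B : Matrix N M K) (node : V → N) (block : V → M)
    {h : N → ℕ} (β : ∀ u, Matrix (Fin (h u)) M K) : Prop :=
  (∀ u a, B u a = 0 → ∀ i, β u i a = 0) ∧
  ∀ v, ∃ α : (Σ u, Fin (h u)) ⊕ M → K,
    Pi.single (block v) 1 =
      α ᵥ* fromRows (Matrix.of fun p => β p.1 p.2) (diagonal (B (node v)))

lemma exists_isLinearBroadcast_of_sender {T : Type*} [Fintype T] (sender : T → N)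
    (t : Matrix T M K) (C : Matrix V T K) (ht : ∀ i b, B (sender i) b = 0 → t i b = 0)
    (hC : ∀ v b, B (node v) b = 0 → (C * t) v b = (Pi.single (block v) 1 : M → K) b) :
    ∃ (h : N → ℕ) (β : ∀ u, Matrix (Fin (h u)) M K),
      IsLinearBroadcast B node block β ∧ ∑ u, h u = Fintype.card T := by
  obtain ⟨h, φ, hφ⟩ := exists_sigma_fin_equiv sender
  refine ⟨h, fun u => Matrix.of fun j => t (φ ⟨u, j⟩), ⟨fun u b hB j => ?_, fun v => ?_⟩, ?_⟩
  · exact ht _ _ (by rwa [hφ])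
  · refine (exists_eq_vecMul_fromRows_diagonal_iff _ _ _).2 ⟨C v ∘ φ, fun b hb => ?_⟩
    calc ((C v ∘ φ) ᵥ* t.submatrix φ id) b = (C v ᵥ* t) b := by
          simp [submatrix_vecMul_equiv, Function.comp_assoc]
      _ = (Pi.single (block v) 1 : M → K) b := by rw [← mul_apply_eq_vecMul, hC v b hb]
  · simpa using Fintype.card_congr φ

lemma exists_isLinearBroadcast_of_eq_single [Finite V] (A : Matrix V M K)
    (hheld : ∀ v, ∃ w, B w (block v) ≠ 0)
    (hA : ∀ v b, B (node v) b = 0 → A v b = (Pi.single (block v) 1 : M → K) b) :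
    ∃ (h : N → ℕ) (β : ∀ u, Matrix (Fin (h u)) M K),
      IsLinearBroadcast B node block β ∧ ∑ u, h u = 2 * A.rank := by
  choose holder hholder using hheld
  obtain ⟨f, C, hC⟩ := exists_eq_mul_submatrix_rank A
  let E : Matrix (Fin A.rank) M K := Matrix.of fun i => Pi.single (block (f i)) 1
  have hmul : fromCols C C * fromRows E (A.submatrix f id - E) = A := by
    rw [fromCols_mul_fromRows, ← Matrix.mul_add, add_sub_cancel, ← hC]
  have key := exists_isLinearBroadcast_of_sender (B := B) (node := node) (block := block)
    (Sum.elim (holder ∘ f) (node ∘ f)) (fromRows E (A.submatrix f id - E)) (fromCols C C) ?_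
    (by rwa [hmul])
  · simpa [two_mul] using key
  · rintro (i | i) b hB
    · have hb : b ≠ block (f i) := fun hb => hholder (f i) (hb ▸ hB)
      simp [E, hb]
    · simpa [E, sub_eq_zero] using hA (f i) b hB

theorem fitting_matrix_gives_decentralized_general [Finite V] (A : Matrix V M K)
    (hheld : ∀ v, ∃ w, B w (block v) ≠ 0) (hdiag : ∀ v, A v (block v) = 1)
    (hfits : ∀ v w, block w ≠ block v → B (node v) (block w) = 0 → A v (block w) = 0) :
    ∃ (h : N → ℕ) (β : ∀ u, Matrix (Fin (h u)) M K),
      IsLinearBroadcast B node block β ∧ ∑ u, h u ≤ 2 * A.rank := by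
  let A' : Matrix V M K := Matrix.of fun v => (Set.range block).indicator (A.row v)
  have hA' : ∀ v b, B (node v) b = 0 → A' v b = (Pi.single (block v) 1 : M → K) b := by
    intro v b hB
    by_cases hb : b = block v
    · subst hb
      simp [A', hdiag]
    · by_cases hreq : b ∈ Set.range block
      · obtain ⟨w, rfl⟩ := hreq
        simp [A', hb, hfits v w hb hB]
      · simp [A', hb, hreq]
  obtain ⟨h, β, hβ, hlen⟩ := exists_isLinearBroadcast_of_eq_single A' hheld hA'
  exact ⟨h, β, hβ, hlen.trans_le <| Nat.mul_le_mul_left 2 (rank_of_indicator_row_le A _)⟩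

end Broadcast

lemma isBroadcastSolution_iff_isLinearBroadcast (R B : Matrix (Fin n) (Fin m) (ZMod 2))
    {h : Fin n → ℕ} (β : ∀ u, Matrix (Fin (h u)) (Fin m) (ZMod 2)) :
    IsBroadcastSolution R B β ↔
      IsLinearBroadcast B (fun v : Vtx R => v.1.1) (fun v => v.1.2) β := by
  simp only [IsBroadcastSolution, IsLinearBroadcast, Subtype.forall, Prod.forall]
  rfl

lemma Fits.apply_eq_zero {R B : Matrix (Fin n) (Fin m) (ZMod 2)}
    {A : Matrix (Vtx R) (Fin m) (ZMod 2)} (hfits : Fits (probEdge R B) (phi R A))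
    (v w : Vtx R) (hne : w.1.2 ≠ v.1.2) (hB : B v.1.1 w.1.2 = 0) : A v w.1.2 = 0 :=
  hfits.2 v w (fun h => hne (by rw [h])) fun ⟨_, hedge⟩ =>
    hedge.elim (by simp [hB]) hne.symm

theorem fitting_matrix_gives_decentralized {n m : ℕ}
    (R B : Matrix (Fin n) (Fin m) (ZMod 2)) (hdisj : DisjointSupports R B)
    (hheld : ∀ u a, R u a = 1 → ∃ w, B w a = 1)
    (A : Matrix (Vtx R) (Fin m) (ZMod 2))
    (hfits : Fits (probEdge R B) (phi R A)) :
    ∃ (h : Fin n → ℕ) (β : ∀ u : Fin n, Matrix (Fin (h u)) (Fin m) (ZMod 2)),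
      IsBroadcastSolution R B β ∧ ∑ u, h u ≤ 2 * A.rank := by
  simp only [isBroadcastSolution_iff_isLinearBroadcast]
  exact fitting_matrix_gives_decentralized_general A
    (fun v => (hheld _ _ v.2).imp fun w hw => by simp [hw]) hfits.1 hfits.apply_eq_zero

end EIC
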